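/- arXiv:1208.5216 — 3 statements merged into one kernel-verified Lean document; each statement's English description precedes it below -/
import Mathlib

section
/- In the direct product construction of a DSS from a perfect regular DSS(v,m,q,ρ) and a perfect regular DSS(v',m',q',ρ') over coprime moduli v and v', every outer difference of the form (0,b) with b ≠ 0 occurs exactly ρ'mq times in the product family {Q_i × Q'_j}. -/
/-- Number of occurrences of `d` as an outer difference (difference of elements
from distinct member sets) in the family `Q`. -/
def outerCount {G ι : Type*} [AddCommGroup G] [DecidableEq G] [Fintype ι] [DecidableEq ι]
    (Q : ι → Finset G) (d : G) : ℕ :=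
  ∑ i : ι, ∑ j : ι, if i = j then 0 else ((Q i ×ˢ Q j).filter (fun p => p.1 - p.2 = d)).card

/-- Number of occurrences of `d` as an inner difference (difference of two distinct
elements of a single member set) in the family `Q`. -/
def innerCount {G ι : Type*} [AddCommGroup G] [DecidableEq G] [Fintype ι]
    (Q : ι → Finset G) (d : G) : ℕ :=
  ∑ i : ι, ((Q i ×ˢ Q i).filter (fun p => p.1 - p.2 = d ∧ p.1 ≠ p.2)).card

theorem stmt_1 (v v' m m' q q' ρ ρ' : ℕ) (hv : 0 < v) (hv' : 0 < v')
    (hco : Nat.Coprime v v')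
    (Q : Fin q → Finset (ZMod v)) (Q' : Fin q' → Finset (ZMod v'))
    (hQdisj : ∀ i j, i ≠ j → Disjoint (Q i) (Q j))
    (hQcard : ∀ i, (Q i).card = m)
    (hQperf : ∀ d : ZMod v, d ≠ 0 → outerCount Q d = ρ)
    (hQ'disj : ∀ i j, i ≠ j → Disjoint (Q' i) (Q' j))
    (hQ'card : ∀ i, (Q' i).card = m')
    (hQ'perf : ∀ d : ZMod v', d ≠ 0 → outerCount Q' d = ρ') :
    ∀ b : ZMod v', b ≠ 0 →
      outerCount (fun ij : Fin q × Fin q' => Q ij.1 ×ˢ Q' ij.2)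
        ((0 : ZMod v), b) = ρ' * m * q := by
  intro b hb
  have key : ∀ x y : Fin q × Fin q',
      (if x = y then 0 else (((Q x.1 ×ˢ Q' x.2) ×ˢ (Q y.1 ×ˢ Q' y.2)).filter
        (fun p => p.1 - p.2 = ((0 : ZMod v), b))).card) =
      if x.1 = y.1 then m * (if x.2 = y.2 then 0 else
        ((Q' x.2 ×ˢ Q' y.2).filter (fun p => p.1 - p.2 = b)).card) else 0 := by
    rintro ⟨i, j⟩ ⟨k, l⟩
    by_cases hik : i = k
    · subst hik
      by_cases hjl : j = l
      · simp [hjl]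
      · simp only [Prod.mk.injEq, hjl, and_false, if_false, if_true]
        rw [← hQcard i, ← Finset.card_product]
        refine Finset.card_nbij' (fun p => (p.1.1, (p.1.2, p.2.2)))
          (fun p => ((p.1, p.2.1), (p.1, p.2.2))) ?_ ?_ ?_ ?_
        · rintro ⟨⟨a, c⟩, ⟨d, e⟩⟩ h
          simp at h ⊢
          tauto
        · rintro ⟨a, c, e⟩ h
          simp at h ⊢
          tauto
        · rintro ⟨⟨a, c⟩, ⟨d, e⟩⟩ h
          simp [sub_eq_zero] at h ⊢
          exact h.2.1
        · rintro ⟨a, c, e⟩ h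
          rfl
    · simp only [Prod.mk.injEq, hik, false_and, if_false]
      rw [Finset.card_eq_zero, Finset.filter_eq_empty_iff]
      rintro ⟨⟨a, c⟩, ⟨d, e⟩⟩ h h2
      simp [sub_eq_zero] at h h2
      have had := h2.1
      subst had
      exact Finset.disjoint_left.mp (hQdisj i k hik) h.1.1 h.2.1
  unfold outerCount
  simp only [key]
  have h := hQ'perf b hb
  unfold outerCount at h
  simp only [Fintype.sum_prod_type]
  have h1 : ∀ (i : Fin q) (j : Fin q'), (∑ k : Fin q, ∑ l : Fin q',
      if i = k then m * (if j = l then 0 else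
        ((Q' j ×ˢ Q' l).filter (fun p => p.1 - p.2 = b)).card) else 0) =
      m * ∑ l : Fin q', (if j = l then 0 else
        ((Q' j ×ˢ Q' l).filter (fun p => p.1 - p.2 = b)).card) := by
    intro i j
    rw [Finset.sum_comm, Finset.mul_sum]
    refine Finset.sum_congr rfl fun l _ => ?_
    rw [Finset.sum_ite_eq]
    simp
  simp only [h1, ← Finset.mul_sum, h]
  simp
  ring
end

section
/- Let p = 16n²+1 be an odd prime. Then the quadratic residues and quadratic non-residues do not suffice; rather, the two 4th-power cyclotomic classes C_0^4 and C_2^4 (each of size 4n²) form a perfect regular DSS(16n²+1, 4n², 2, 2n²): every nonzero element of F_p occurs exactly 2n² times as a difference a − b with a ∈ C_0^4, b ∈ C_2^4 or a ∈ C_2^4, b ∈ C_0^4. -/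
lemma sq_eq_one_iff_of_dom {R : Type*} [CommRing R] [IsDomain R] {a : R} (h : a ^ 2 = 1) :
    a = 1 ∨ a = -1 := by
  rw [← one_pow 2] at h
  exact sq_eq_sq_iff_eq_or_eq_neg.1 h

lemma aux_shift {p : ℕ} [Fact p.Prime] (φ ψ : MulChar (ZMod p) GaussianInt) (d : ZMod p)
    (hd : d ≠ 0) (hψ : ψ (-1) = 1) :
    ∑ x : ZMod p, φ x * ψ (x - d) = φ d * ψ d * jacobiSum φ ψ := by
  rw [jacobiSum, Finset.mul_sum, ← Equiv.sum_comp (Equiv.mulLeft₀ d hd)]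
  refine Finset.sum_congr rfl fun x _ => ?_
  have h1 : d * x - d = d * ((-1) * (1 - x)) := by ring
  simp only [Equiv.mulLeft₀_apply, h1, map_mul, hψ]
  ring

lemma aux_card {p : ℕ} [Fact p.Prime] (A B : Finset (ZMod p)) (d : ZMod p) :
    (((A ×ˢ B).filter (fun q => q.1 - q.2 = d)).card : GaussianInt) =
      ∑ x : ZMod p, (if x ∈ A then 1 else 0) * (if x - d ∈ B then 1 else 0) := by
  have h : ((A ×ˢ B).filter (fun q => q.1 - q.2 = d)).card =
      (Finset.univ.filter (fun x => x ∈ A ∧ x - d ∈ B)).card := by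
    refine Finset.card_bij (fun q _ => q.1) ?_ ?_ ?_
    · rintro ⟨a, b⟩ h
      simp only [Finset.mem_filter, Finset.mem_product, Finset.mem_univ, true_and] at h ⊢
      obtain ⟨⟨ha, hb⟩, rfl⟩ := h
      exact ⟨ha, by simpa using hb⟩
    · rintro ⟨a, b⟩ h ⟨a', b'⟩ h' e
      simp only [Finset.mem_filter, Finset.mem_product] at h h' e
      subst e
      have : b = b' := by
        have := h.2.trans h'.2.symm
        simpa using this
      rw [this]
    · intro x hx
      simp only [Finset.mem_filter, Finset.mem_univ, true_and] at hx
      exact ⟨(x, x - d), by simp [hx.1, hx.2], rfl⟩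
  rw [h, Finset.card_filter]
  push_cast
  refine Finset.sum_congr rfl fun x _ => ?_
  by_cases h1 : x ∈ A <;> by_cases h2 : x - d ∈ B <;> simp [h1, h2]

lemma aux_norm {p : ℕ} [Fact p.Prime] (χ : MulChar (ZMod p) GaussianInt)
    (h1 : χ ≠ 1) (h2 : χ * χ ≠ 1) :
    jacobiSum χ χ * jacobiSum χ⁻¹ χ⁻¹ = (p : GaussianInt) := by
  apply GaussianInt.toComplex_inj.1
  have inj : Function.Injective GaussianInt.toComplex := fun x y h => GaussianInt.toComplex_inj.1 h
  have key := jacobiSum_mul_jacobiSum_inv (F := ZMod p) (F' := ℂ)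
    (χ := χ.ringHomComp GaussianInt.toComplex) (φ := χ.ringHomComp GaussianInt.toComplex)
    (by
      rw [ringChar.eq ℂ 0, ringChar.eq (ZMod p) p]
      exact (Fact.out : p.Prime).ne_zero.symm)
    ((MulChar.ringHomComp_ne_one_iff inj).2 h1) ((MulChar.ringHomComp_ne_one_iff inj).2 h1)
    (by rw [← MulChar.ringHomComp_mul]; exact (MulChar.ringHomComp_ne_one_iff inj).2 h2)
  rw [MulChar.ringHomComp_inv, jacobiSum_ringHomComp, jacobiSum_ringHomComp, ZMod.card] at key
  rw [map_mul, key]; simp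

lemma aux_sq (a b c p : ℤ) (hp : Prime p) (hpos : 0 < p) (h : a ^ 2 + b ^ 2 = p)
    (hc : p = c ^ 2 + 1) :
    a ^ 2 = 1 ∨ b ^ 2 = 1 := by
  have main : ∀ b : ℤ, a ^ 2 + b ^ 2 = p → p ∣ a * c - b → a ^ 2 = 1 ∨ b ^ 2 = 1 := by
    rintro b h ⟨k, hk⟩
    have e : (a * c - b) ^ 2 + (a + b * c) ^ 2 = p ^ 2 := by
      have : p ^ 2 = (a ^ 2 + b ^ 2) * (c ^ 2 + 1) := by rw [h, ← hc]; ring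
      rw [this]; ring
    have hk2 : k ^ 2 ≤ 1 := by
      rw [hk] at e
      have : p ^ 2 * k ^ 2 ≤ p ^ 2 * 1 := by nlinarith [sq_nonneg (a + b * c)]
      exact le_of_mul_le_mul_left this (by positivity)
    by_cases hk0 : k = 0
    · left
      subst hk0
      have hb : b = a * c := by linarith
      subst hb
      have : p * (a ^ 2) = p * 1 := by nlinarith
      exact mul_left_cancel₀ hpos.ne' this
    · right
      have hk1 : k ^ 2 = 1 := by
        have : 0 < k ^ 2 := by positivity
        omega
      rw [hk, mul_pow, hk1] at e
      have h0 : a + b * c = 0 := by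
        have : (a + b * c) ^ 2 = 0 := by linarith
        exact pow_eq_zero_iff (two_ne_zero) |>.1 this
      have ha : a = -(b * c) := by linarith
      subst ha
      have : p * (b ^ 2) = p * 1 := by nlinarith
      exact mul_left_cancel₀ hpos.ne' this
  have hd : p ∣ (a * c - b) * (a * c - (-b)) := ⟨a ^ 2 - 1, by
    have : b ^ 2 = p - a ^ 2 := by linarith
    have h2 : c ^ 2 = p - 1 := by linarith
    calc (a * c - b) * (a * c - (-b)) = a ^ 2 * c ^ 2 - b ^ 2 := by ring
      _ = _ := by rw [this, h2]; ring⟩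
  rcases hp.dvd_or_dvd hd with h1 | h1
  · exact main b h h1
  · have := main (-b) (by simpa using h) h1
    simpa using this

theorem stmt_9 (n p : ℕ) (hp : p = 16 * n ^ 2 + 1) (hprime : p.Prime) (hodd : Odd p)
    (α : (ZMod p)ˣ) (hα : ∀ x : (ZMod p)ˣ, x ∈ Subgroup.zpowers α) :
    -- the 4th-power cyclotomic classes C_i^4 = {α^(i+4t) : 0 ≤ t < 4n²}
    let C : ℕ → Finset (ZMod p) := fun i =>
      (Finset.range (4 * n ^ 2)).image (fun t => ((α : ZMod p)) ^ (i + 4 * t))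
    -- {C_0^4, C_2^4} is a perfect regular DSS(16n²+1, 4n², 2, 2n²)
    (C 0).card = 4 * n ^ 2 ∧ (C 2).card = 4 * n ^ 2 ∧ Disjoint (C 0) (C 2) ∧
    (∀ d : ZMod p, d ≠ 0 → outerCount ![C 0, C 2] d = 2 * n ^ 2) := by
  intro C
  have : Fact p.Prime := ⟨hprime⟩
  have hn : n ≠ 0 := by
    rintro rfl
    simp at hp
    exact hprime.one_lt.ne' hp
  have hn2 : 0 < n ^ 2 := by positivity
  have hord : orderOf α = 16 * n ^ 2 := by
    rw [orderOf_eq_card_of_forall_mem_zpowers hα, Nat.card_eq_fintype_card, ZMod.card_units, hp]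
    simp
  have hpow : ∀ a b : ℕ, (α : ZMod p) ^ a = (α : ZMod p) ^ b ↔ a ≡ b [MOD 16 * n ^ 2] := by
    intro a b
    rw [← hord, ← pow_eq_pow_iff_modEq, ← Units.val_pow_eq_pow_val, ← Units.val_pow_eq_pow_val,
      Units.val_inj]
  have hsurj : ∀ x : ZMod p, x ≠ 0 → ∃ k : ℕ, x = (α : ZMod p) ^ k := by
    intro x hx
    obtain ⟨k, hk⟩ := (mem_powers_iff_mem_zpowers).2 (hα (Units.mk0 x hx))
    refine ⟨k, ?_⟩
    have := congrArg Units.val hk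
    simpa using this.symm
  have hmod4 : ∀ a b : ℕ, a ≡ b [MOD 16 * n ^ 2] → a % 4 = b % 4 := by
    intro a b h
    exact h.of_dvd ⟨4 * n ^ 2, by ring⟩
  have hcard : ∀ i, (C i).card = 4 * n ^ 2 := by
    intro i
    simp only [C]
    rw [Finset.card_image_of_injOn, Finset.card_range]
    intro s hs t ht h
    simp only [Finset.coe_range, Set.mem_Iio] at hs ht
    have h1 := (hpow _ _).1 h
    have h2 : 4 * s ≡ 4 * t [MOD 16 * n ^ 2] := Nat.ModEq.add_left_cancel' i h1
    have h3 := Nat.ModEq.eq_of_lt_of_lt h2 (by omega) (by omega)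
    omega
  have hmem : ∀ i, i < 4 → ∀ k : ℕ, (α : ZMod p) ^ k ∈ C i ↔ k % 4 = i := by
    intro i hi k
    simp only [C, Finset.mem_image, Finset.mem_range]
    constructor
    · rintro ⟨t, ht, h⟩
      have := hmod4 _ _ ((hpow _ _).1 h)
      omega
    · intro h
      have hk : k % (16 * n ^ 2) ≡ k [MOD 16 * n ^ 2] := Nat.mod_modEq _ _
      have h4 := hmod4 _ _ hk
      have hlt : k % (16 * n ^ 2) < 16 * n ^ 2 := Nat.mod_lt _ (by omega)
      refine ⟨(k % (16 * n ^ 2)) / 4, by omega, ?_⟩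
      rw [hpow]
      have : i + 4 * (k % (16 * n ^ 2) / 4) = k % (16 * n ^ 2) := by omega
      rw [this]; exact hk
  have hzero : ∀ i, (0 : ZMod p) ∉ C i := by
    intro i h
    simp only [C, Finset.mem_image] at h
    obtain ⟨t, _, h⟩ := h
    exact (α.isUnit.pow _).ne_zero h
  have hdisj : Disjoint (C 0) (C 2) := by
    rw [Finset.disjoint_left]
    intro x h0 h2
    by_cases hx : x = 0
    · subst hx; exact hzero 0 h0
    · obtain ⟨k, rfl⟩ := hsurj x hx
      rw [hmem _ (by norm_num)] at h0 h2
      omega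
  refine ⟨hcard 0, hcard 2, hdisj, ?_⟩
  -- the quartic character
  let I : GaussianInt := ⟨0, 1⟩
  have hI2 : I ^ 2 = -1 := by rw [sq]; rfl
  have hI4 : I ^ 4 = 1 := by
    calc I ^ 4 = (I ^ 2) ^ 2 := by ring
      _ = 1 := by rw [hI2]; ring
  let u : GaussianIntˣ := ⟨I, I ^ 3, by rw [← hI4]; ring, by rw [← hI4]; ring⟩
  have hu : u ∈ rootsOfUnity (Fintype.card (ZMod p)ˣ) GaussianInt := by
    rw [mem_rootsOfUnity, ZMod.card_units, hp]
    ext1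
    simp only [Units.val_pow_eq_pow_val, Units.val_one, u]
    have : 16 * n ^ 2 + 1 - 1 = 4 * (4 * n ^ 2) := by simp; ring
    rw [this, pow_mul, hI4, one_pow]
  obtain ⟨χ, hχ⟩ : ∃ χ : MulChar (ZMod p) GaussianInt, χ α = I :=
    ⟨MulChar.ofRootOfUnity hu hα, MulChar.ofRootOfUnity_spec hu hα⟩
  have hχk : ∀ k : ℕ, χ ((α : ZMod p) ^ k) = I ^ k := by
    intro k; rw [map_pow, hχ]
  have hχ4 : χ ^ 4 = 1 := by
    rw [MulChar.eq_iff hα, MulChar.pow_apply_coe, hχ, hI4, MulChar.one_apply_coe]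
  have hinv : χ⁻¹ = χ ^ 3 := by
    rw [inv_eq_iff_mul_eq_one, ← pow_succ', hχ4]
  have hχ1 : χ ≠ 1 := by
    rw [Ne, MulChar.eq_iff hα, hχ, MulChar.one_apply_coe]
    decide
  have hχ2 : χ * χ ≠ 1 := by
    rw [Ne, MulChar.eq_iff hα, MulChar.mul_apply, hχ, MulChar.one_apply_coe]
    decide
  have hηinv : (χ * χ)⁻¹ = χ * χ := by
    rw [inv_eq_iff_mul_eq_one, ← hχ4, ← sq, ← sq, ← pow_mul]
  have hneg : χ (-1) = 1 := by
    have h1 : (-1 : ZMod p) = (α : ZMod p) ^ (8 * n ^ 2) := by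
      have hsq : ((α : ZMod p) ^ (8 * n ^ 2)) ^ 2 = 1 := by
        rw [← pow_mul, ← pow_zero (α : ZMod p), hpow]
        have : 8 * n ^ 2 * 2 = 16 * n ^ 2 := by ring
        rw [this]; simp [Nat.ModEq]
      rcases sq_eq_one_iff_of_dom hsq with h | h
      · exfalso
        rw [← pow_zero (α : ZMod p), hpow] at h
        have := Nat.ModEq.eq_of_lt_of_lt h (by omega) (by omega)
        omega
      · exact h.symm
    rw [h1, hχk]
    have : 8 * n ^ 2 = 4 * (2 * n ^ 2) := by ring
    rw [this, pow_mul, hI4, one_pow]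
  have hηneg : (χ * χ) (-1) = 1 := by rw [MulChar.mul_apply, hneg, one_mul]
  have hineg : χ⁻¹ (-1) = 1 := by
    rw [hinv, MulChar.pow_apply' _ (by norm_num), hneg, one_pow]
  have honeneg : (1 : MulChar (ZMod p) GaussianInt) (-1) = 1 := MulChar.one_apply isUnit_one.neg
  have hind : ∀ x : ZMod p,
      (4 * (if x ∈ C 0 then 1 else 0) : GaussianInt) =
        (1 : MulChar (ZMod p) GaussianInt) x + χ x + (χ * χ) x + χ⁻¹ x ∧
      (4 * (if x ∈ C 2 then 1 else 0) : GaussianInt) =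
        (1 : MulChar (ZMod p) GaussianInt) x - χ x + (χ * χ) x - χ⁻¹ x := by
    intro x
    by_cases hx : x = 0
    · subst hx
      simp only [hzero, MulChar.map_zero]; simp
    · obtain ⟨k, rfl⟩ := hsurj x hx
      simp only [hmem 0 (by norm_num), hmem 2 (by norm_num)]
      rw [MulChar.one_apply (α.isUnit.pow k),
        MulChar.mul_apply, hinv, MulChar.pow_apply' _ (by norm_num), hχk]
      have : I ^ k = I ^ (k % 4) := by
        conv_lhs => rw [← Nat.div_add_mod k 4, pow_add, pow_mul, hI4, one_pow, one_mul]
      rw [this]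
      have h4 : k % 4 < 4 := Nat.mod_lt _ (by norm_num)
      generalize k % 4 = r at h4 ⊢
      interval_cases r <;> constructor <;> decide
  set J := jacobiSum χ χ with hJ
  set J' := jacobiSum χ⁻¹ χ⁻¹ with hJ'
  have hstar : J' = star J := by
    rw [hJ', hJ]
    have : χ⁻¹ = χ.ringHomComp (starRingEnd GaussianInt) := by
      rw [MulChar.eq_iff hα, MulChar.ringHomComp_apply, hinv, MulChar.pow_apply_coe, hχ]
      decide
    rw [this, jacobiSum_ringHomComp]; rfl
  have hnorm : J.re ^ 2 + J.im ^ 2 = (p : ℤ) := by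
    have h := aux_norm χ hχ1 hχ2
    rw [← hJ, ← hJ', hstar] at h
    have h2 := congrArg Zsqrtd.re h
    simp at h2
    linarith
  have hcount : ∀ d : ZMod p, d ≠ 0 →
      (8 * (outerCount ![C 0, C 2] d : ℤ) = p - 1 - 2 * (1 + J.re) ∨
       8 * (outerCount ![C 0, C 2] d : ℤ) = p - 1 + 2 * (1 + J.re)) ∧
      (d = 1 → 8 * (outerCount ![C 0, C 2] d : ℤ) = p - 1 - 2 * (1 + J.re)) := by
    intro d hd
    have hη : ((χ * χ) d = 1 ∨ (χ * χ) d = -1) := by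
      obtain ⟨k, rfl⟩ := hsurj d hd
      rw [MulChar.mul_apply, hχk, ← mul_pow, ← sq, hI2]
      exact neg_one_pow_eq_or _ k
    have hii : χ d * χ⁻¹ d = 1 := by
      rw [← MulChar.mul_apply, mul_inv_cancel, MulChar.one_apply hd.isUnit]
    have hone : (1 : MulChar (ZMod p) GaussianInt) d = 1 := MulChar.one_apply hd.isUnit
    have hi2 : χ⁻¹ d * χ⁻¹ d = (χ * χ) d := by
      rw [← MulChar.mul_apply, ← mul_inv, hηinv]
    have hηη : (χ * χ) d * (χ * χ) d = 1 := by
      rcases hη with h | h <;> rw [h] <;> ring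
    have key : 16 * (outerCount ![C 0, C 2] d : GaussianInt) =
        2 * ((p : GaussianInt) - 1 - (χ * χ) d * (2 + J + J')) := by
      have e1 : (outerCount ![C 0, C 2] d : GaussianInt) =
          ∑ x : ZMod p, ((if x ∈ C 0 then 1 else 0) * (if x - d ∈ C 2 then 1 else 0)
            + (if x ∈ C 2 then 1 else 0) * (if x - d ∈ C 0 then 1 else 0)) := by
        rw [Finset.sum_add_distrib, ← aux_card, ← aux_card]
        simp [outerCount, Fin.sum_univ_two]
      let o : MulChar (ZMod p) GaussianInt := 1
      have e2 : 16 * (outerCount ![C 0, C 2] d : GaussianInt) =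
          2 * (∑ x : ZMod p, o x * o (x - d) + ∑ x : ZMod p, o x * (χ * χ) (x - d)
            + ∑ x : ZMod p, (χ * χ) x * o (x - d) + ∑ x : ZMod p, (χ * χ) x * (χ * χ) (x - d)
            - ∑ x : ZMod p, χ x * χ (x - d) - ∑ x : ZMod p, χ x * χ⁻¹ (x - d)
            - ∑ x : ZMod p, χ⁻¹ x * χ (x - d) - ∑ x : ZMod p, χ⁻¹ x * χ⁻¹ (x - d)) := by
        rw [e1]
        simp only [← Finset.sum_add_distrib, ← Finset.sum_sub_distrib, Finset.mul_sum]
        refine Finset.sum_congr rfl fun x _ => ?_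
        obtain ⟨a0, a2⟩ := hind x
        obtain ⟨b0, b2⟩ := hind (x - d)
        generalize (if x ∈ C 0 then (1 : GaussianInt) else 0) = A0 at *
        generalize (if x ∈ C 2 then (1 : GaussianInt) else 0) = A2 at *
        generalize (if x - d ∈ C 0 then (1 : GaussianInt) else 0) = B0 at *
        generalize (if x - d ∈ C 2 then (1 : GaussianInt) else 0) = B2 at *
        have : 16 * (A0 * B2 + A2 * B0) = (4 * A0) * (4 * B2) + (4 * A2) * (4 * B0) := by ring
        rw [this, a0, a2, b0, b2]
        simp only [o]
        ring
      rw [e2, aux_shift _ _ _ hd honeneg, aux_shift _ _ _ hd hηneg, aux_shift _ _ _ hd honeneg,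
        aux_shift _ _ _ hd hηneg, aux_shift _ _ _ hd hneg, aux_shift _ _ _ hd hineg,
        aux_shift _ _ _ hd hneg, aux_shift _ _ _ hd hineg]
      have j1 : jacobiSum o o = (p : GaussianInt) - 2 := by
        simp only [o]; rw [jacobiSum_one_one, ZMod.card]
      have j2 : jacobiSum o (χ * χ) = -1 := jacobiSum_one_nontrivial hχ2
      have j3 : jacobiSum (χ * χ) o = -1 := by rw [jacobiSum_comm, j2]
      have j4 : jacobiSum (χ * χ) (χ * χ) = -1 := by
        have := jacobiSum_nontrivial_inv hχ2
        rwa [hηinv, hηneg] at this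
      have j5 : jacobiSum χ χ⁻¹ = -1 := by rw [jacobiSum_nontrivial_inv hχ1, hneg]
      have j6 : jacobiSum χ⁻¹ χ = -1 := by rw [jacobiSum_comm, j5]
      have ho : o d = 1 := hone
      rw [j1, j2, j3, j4, j5, j6, ← hJ, ← hJ', ho, hηη, hii, mul_comm (χ⁻¹ d) (χ d), hii, hi2,
        ← MulChar.mul_apply]
      ring
    have hJJ : 2 + J + J' = ((2 * (1 + J.re) : ℤ) : GaussianInt) := by
      rw [hstar]
      ext <;> simp
      ring
    rw [hJJ] at key
    have fin : ∀ e : ℤ, (χ * χ) d = (e : GaussianInt) →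
        8 * (outerCount ![C 0, C 2] d : ℤ) = p - 1 - e * (2 * (1 + J.re)) := by
      intro e he
      rw [he] at key
      have : (16 * (outerCount ![C 0, C 2] d : ℤ)) = 2 * ((p : ℤ) - 1 - e * (2 * (1 + J.re))) := by
        have inj : Function.Injective (Int.cast : ℤ → GaussianInt) := Int.cast_injective
        apply inj
        push_cast at key ⊢
        exact key
      linarith
    refine ⟨?_, ?_⟩
    · rcases hη with h | h
      · left; have := fin 1 (by simpa using h); linarith
      · right; have := fin (-1) (by simpa using h); linarith
    · rintro rfl
      have := fin 1 (by rw [map_one]; simp)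
      linarith
  have hpZ : (p : ℤ) = 16 * (n : ℤ) ^ 2 + 1 := by rw [hp]; push_cast; ring
  have hre : J.re = -1 := by
    have h1 := (hcount 1 one_ne_zero).2 rfl
    have hmod : J.re % 4 = 3 := by
      rw [hpZ] at h1
      omega
    rcases aux_sq J.re J.im (4 * n) p (Nat.prime_iff_prime_int.1 hprime) (by exact_mod_cast hprime.pos)
      hnorm (by rw [hpZ]; ring) with h | h
    · rcases sq_eq_one_iff_of_dom h with h | h
      · omega
      · exact h
    · exfalso
      have h2 : J.re ^ 2 = 16 * (n : ℤ) ^ 2 := by linarith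
      have h3 : J.re = 4 * (J.re / 4) + 3 := by omega
      rw [h3] at h2
      ring_nf at h2
      omega
  intro d hd
  have h := (hcount d hd).1
  rw [hre, hpZ] at h
  have h2 : 8 * (outerCount ![C 0, C 2] d : ℤ) = 16 * (n : ℤ) ^ 2 := by
    rcases h with h | h <;> linarith
  have h3 : 8 * outerCount ![C 0, C 2] d = 16 * n ^ 2 := by exact_mod_cast h2
  omega
end

section
/- Let p = 108n²+1 be an odd prime. Then 2 is a cubic residue modulo p, and the two 6th-power cyclotomic classes C_0^6 and C_3^6 (each of size 18n²) form a perfect regular DSS(108n²+1, 18n², 2, 6n²). -/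
namespace DSSaux
set_option linter.unusedSectionVars false
open Finset

/-- integer quadratic-form uniqueness -/
lemma unique_rep (n p : ℕ) (hp : p = 108 * n ^ 2 + 1) (hprime : p.Prime) (L M : ℤ)
    (h : 4 * (p : ℤ) = L ^ 2 + 27 * M ^ 2) (hL : L % 3 = 1) : L = -2 ∧ 4 ∣ M := by
  have hpz : Prime (p : ℤ) := Nat.prime_iff_prime_int.mp hprime
  have hp' : (p : ℤ) = 108 * (n : ℤ) ^ 2 + 1 := by rw [hp]; push_cast; ring
  have key : ∀ M : ℤ, 4 * (p : ℤ) = L ^ 2 + 27 * M ^ 2 → (p : ℤ) ∣ 4 * n * L - 2 * M →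
      M = 2 * n * L := by
    intro M h hd
    obtain ⟨k, hk⟩ := hd
    have h1 : 16 * (p : ℤ) ^ 2 = (2 * L + 108 * n * M) ^ 2 + 27 * (4 * n * L - 2 * M) ^ 2 := by
      linear_combination (4 * (p : ℤ)) * h + 4 * (L ^ 2 + 27 * M ^ 2) * hp'
    have hppos : (0 : ℤ) < (p : ℤ) ^ 2 := by have := hprime.pos; positivity
    have hk0 : k = 0 := by
      by_contra hne
      have hk1 : 1 ≤ k ^ 2 := by have : 0 < k ^ 2 := by positivity
                                 omega
      rw [hk] at h1
      nlinarith [sq_nonneg (2 * L + 108 * n * M)]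
    rw [hk0] at hk
    linarith
  have hprod : (p : ℤ) ∣ (4 * n * L - 2 * M) * (4 * n * L - 2 * (-M)) :=
    ⟨4 * (16 * n ^ 2 - M ^ 2), by
      linear_combination (-16 * (n : ℤ) ^ 2) * h + 4 * M ^ 2 * hp'⟩
  have fin : ∀ M : ℤ, 4 * (p : ℤ) = L ^ 2 + 27 * M ^ 2 → M = 2 * n * L → L = -2 := by
    intro M h hM
    have h2 : (p : ℤ) * (L ^ 2 - 4) = 0 := by
      rw [hM] at h
      linear_combination -h + L ^ 2 * hp'
    rcases mul_eq_zero.mp h2 with h3 | h3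
    · exact absurd h3 hpz.ne_zero
    · have : (L - 2) * (L + 2) = 0 := by linarith
      rcases mul_eq_zero.mp this with h4 | h4 <;> omega
  rcases hpz.dvd_or_dvd hprod with hd | hd
  · have hM := key M h hd
    have := fin M h hM
    exact ⟨this, ⟨-n, by rw [hM, this]; ring⟩⟩
  · have hM := key (-M) (by rw [h]; ring) hd
    have := fin (-M) (by rw [h]; ring) hM
    exact ⟨this, ⟨n, by rw [this] at hM; linarith⟩⟩

lemma mem_adjoin_omega {ω z : ℂ} (hω : ω ^ 2 + ω + 1 = 0) (hz : z ∈ Algebra.adjoin ℤ {ω}) :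
    ∃ a b : ℤ, z = a + b * ω := by
  induction hz using Algebra.adjoin_induction with
  | mem x hx => exact ⟨0, 1, by simp at hx; simp [hx]⟩
  | algebraMap r => exact ⟨r, 0, by simp⟩
  | add x y _ _ hx hy =>
    obtain ⟨a, b, rfl⟩ := hx
    obtain ⟨c, d, rfl⟩ := hy
    exact ⟨a + c, b + d, by push_cast; ring⟩
  | mul x y _ _ hx hy =>
    obtain ⟨a, b, rfl⟩ := hx
    obtain ⟨c, d, rfl⟩ := hy
    refine ⟨a * c - b * d, a * d + b * c - b * d, ?_⟩
    push_cast
    linear_combination (b * d : ℂ) * hω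

lemma omega_indep {ω : ℂ} (hω : ω ^ 2 + ω + 1 = 0) {a b : ℤ} (h : (a : ℂ) + b * ω = 0) :
    a = 0 ∧ b = 0 := by
  have h1 : ((a ^ 2 - a * b + b ^ 2 : ℤ) : ℂ) = 0 := by
    push_cast
    linear_combination (a - b - b * ω : ℂ) * h + (b : ℂ) ^ 2 * hω
  have h2 : a ^ 2 - a * b + b ^ 2 = 0 := by exact_mod_cast h1
  have hb : b = 0 := by
    have : b ^ 2 = 0 := le_antisymm (by nlinarith [sq_nonneg (2 * a - b)]) (sq_nonneg _)
    simpa using this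
  subst hb
  simpa using h2

section F
variable {F : Type*} [Field F] [Fintype F] [DecidableEq F]

/-- complex quadratic character -/
noncomputable def eta (F : Type*) [Field F] [Fintype F] [DecidableEq F] : MulChar F ℂ :=
  (quadraticChar F).ringHomComp (Int.castRingHom ℂ)

lemma eta_apply (x : F) : eta F x = ((quadraticChar F x : ℤ) : ℂ) := rfl

lemma eta_ne_one (hF : ringChar F ≠ 2) : eta F ≠ 1 := 
  (MulChar.ringHomComp_ne_one_iff (Int.cast_injective)).mpr (quadraticChar_ne_one hF)

lemma eta_mul_self : eta F * eta F = 1 := by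
  rw [← sq]; exact ((quadraticChar_isQuadratic F).comp _).sq_eq_one

lemma eta_inv : (eta F)⁻¹ = eta F := ((quadraticChar_isQuadratic F).comp _).inv

lemma eta_sq {x : F} (hx : x ≠ 0) : eta F (x ^ 2) = 1 := by
  rw [eta_apply, quadraticChar_sq_one' hx]; simp

lemma sum_sq (hF : ringChar F ≠ 2) (f : F → ℂ) :
    ∑ u : F, f (u ^ 2) = ∑ w : F, (eta F w + 1) * f w := by
  classical
  rw [← Finset.sum_fiberwise (s := univ) (g := fun u : F => u ^ 2)]
  refine Finset.sum_congr rfl fun w _ => ?_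
  have h := quadraticChar_card_sqrts hF w
  have h2 : (#({x : F | x ^ 2 = w} : Finset F) : ℂ) = eta F w + 1 := by
    rw [eta_apply]
    have : #({x : F | x ^ 2 = w} : Finset F) = #{x : F | x ^ 2 = w}.toFinset := by
      congr 1; ext; simp
    rw [this]
    exact_mod_cast h
  rw [← h2, Finset.sum_congr rfl (g := fun _ => f w)]
  · simp
  · intro x hx; simp at hx; simp [hx]

lemma two_ne (hF : ringChar F ≠ 2) : (2 : F) ≠ 0 := Ring.two_ne_zero hF

lemma jac_dup (hF : ringChar F ≠ 2) (χ : MulChar F ℂ) :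
    χ 4 * jacobiSum χ χ = ∑ w : F, (eta F w + 1) * χ (1 - w) := by
  have h2 := two_ne hF
  rw [← sum_sq hF (fun w => χ (1 - w)), jacobiSum, Finset.mul_sum]
  let e : F ≃ F := ((Equiv.mulLeft₀ (2 : F) h2).trans (Equiv.subRight 1))
  rw [← e.sum_comp (fun u => χ (1 - u ^ 2))]
  refine Finset.sum_congr rfl fun x _ => ?_
  rw [← map_mul, ← map_mul]
  congr 1
  simp [e]
  ring

lemma jac_dup' (hF : ringChar F ≠ 2) {χ : MulChar F ℂ} (hχ : χ ≠ 1) (h4 : χ 4 = 1) :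
    jacobiSum χ χ = jacobiSum (eta F) χ := by
  have h := jac_dup hF χ
  rw [h4, one_mul] at h
  rw [h, jacobiSum]
  simp only [add_mul, Finset.sum_add_distrib, one_mul]
  have : ∑ x : F, χ (1 - x) = 0 := by
    rw [← MulChar.sum_eq_zero_of_ne_one hχ, ← (Equiv.subLeft (1 : F)).sum_comp]
    simp
  rw [this, add_zero]

lemma jac_eta_mul (hm : eta F (-1) = 1) (χ : MulChar F ℂ) :
    jacobiSum (eta F) (eta F * χ) = jacobiSum (eta F) χ⁻¹ := by
  rw [jacobiSum_comm, jacobiSum_comm (eta F), jacobiSum, jacobiSum,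
    ← Equiv.sum_comp (Equiv.inv F)]
  refine Finset.sum_congr rfl fun x _ => ?_
  simp only [Equiv.inv_apply, MulChar.mul_apply, MulChar.inv_apply']
  by_cases hx : x = 0
  · simp [hx, MulChar.map_zero]
  have e1 : eta F x⁻¹ * eta F (1 - x⁻¹) = eta F (1 - x) := by
    rw [← map_mul]
    have : x⁻¹ * (1 - x⁻¹) = (-1) * ((1 - x) * (x⁻¹) ^ 2) := by field_simp; ring
    rw [this, map_mul, map_mul, hm, eta_sq (inv_ne_zero hx)]; ring
  rw [← e1]; ring

lemma shift_sum (χ φ : MulChar F ℂ) (hm : φ (-1) = 1) {d : F} (hd : d ≠ 0) :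
    ∑ x : F, χ x * φ (x - d) = (χ d * φ d) * jacobiSum χ φ := by
  rw [jacobiSum, Finset.mul_sum, ← Equiv.sum_comp (Equiv.mulLeft₀ d hd)]
  refine Finset.sum_congr rfl fun x _ => ?_
  have : d * x - d = (-1) * (d * (1 - x)) := by ring
  change χ (d * x) * φ (d * x - d) = _
  simp only [this, map_mul, hm]
  ring

lemma jac_star (χ φ : MulChar F ℂ) : star (jacobiSum χ φ) = jacobiSum χ⁻¹ φ⁻¹ := by
  simp only [jacobiSum, star_sum, star_mul', MulChar.star_apply']

end F

lemma exists_omega : ∃ ω : ℂ, IsPrimitiveRoot ω 3 ∧ ω ^ 2 + ω + 1 = 0 ∧ star ω = -1 - ω := by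
  have h := Complex.isPrimitiveRoot_exp 3 (by norm_num)
  set ω : ℂ := Complex.exp (2 * Real.pi * Complex.I / (3 : ℕ)) with hω
  have h1 : ω ^ 2 + ω + 1 = 0 := by
    have h3 := h.geom_sum_eq_zero (by norm_num)
    simp [Finset.sum_range_succ] at h3
    linear_combination h3
  refine ⟨ω, h, h1, ?_⟩
  have hn : ‖ω‖ = 1 := h.norm'_eq_one (by norm_num)
  have hs : ω * star ω = 1 := by
    have := Complex.mul_conj' ω
    rw [hn] at this
    simpa using this
  have h0 : ω ≠ 0 := h.ne_zero (by norm_num)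
  apply mul_left_cancel₀ h0
  rw [hs]
  linear_combination h1

lemma J_facts (n p : ℕ) (hp : p = 108 * n ^ 2 + 1) [hprime : Fact p.Prime]
    (hF : ringChar (ZMod p) ≠ 2)
    (χ : MulChar (ZMod p) ℂ) (hχ : χ ≠ 1) (h3 : χ ^ 3 = 1) :
    χ 2 = 1 ∧ jacobiSum χ χ + jacobiSum χ⁻¹ χ⁻¹ = -2 := by
  obtain ⟨ω, hω, hω1, hω2⟩ := exists_omega
  have hcard : Fintype.card (ZMod p) = p := ZMod.card p
  obtain ⟨z, hz, hJ⟩ := exists_jacobiSum_eq_neg_one_add (n := 3) (by norm_num) h3 h3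
    (by rw [hcard, hp]; exact ⟨36 * n ^ 2, by rw [Nat.add_sub_cancel]; ring⟩) hω
  obtain ⟨c, e, rfl⟩ := mem_adjoin_omega hω1 hz
  set M : ℤ := e - c with hM
  have hJ1 : jacobiSum χ χ = ((3 * e - 1 : ℤ) : ℂ) + ((3 * M : ℤ) : ℂ) * ω := by
    rw [hJ, hM]; push_cast
    linear_combination (c + e * ω - 3 * e : ℂ) * hω1
  have hJ2 : jacobiSum χ⁻¹ χ⁻¹ = ((3 * e - 1 : ℤ) : ℂ) + ((3 * M : ℤ) : ℂ) * (-1 - ω) := by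
    rw [← jac_star, hJ1, star_add, star_mul', hω2]
    simp
  have hsq : χ * χ ≠ 1 := by
    intro h
    apply hχ
    calc χ = χ ^ 3 * (χ * χ)⁻¹ := by group
      _ = 1 := by rw [h3, h]; simp
  have hc : ringChar ℂ ≠ ringChar (ZMod p) := by
    rw [ZMod.ringChar_zmod_n, ringChar.eq ℂ 0]
    exact hprime.out.ne_zero.symm
  have hprod := jacobiSum_mul_jacobiSum_inv hc hχ hχ hsq
  rw [hJ1, hJ2, hcard] at hprod
  have hprodZ : (3 * e - 1) ^ 2 - (3 * e - 1) * (3 * M) + (3 * M) ^ 2 = (p : ℤ) := by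
    have : (((3 * e - 1) ^ 2 - (3 * e - 1) * (3 * M) + (3 * M) ^ 2 : ℤ) : ℂ) = ((p : ℤ) : ℂ) := by
      push_cast at hprod ⊢
      rw [← hprod]
      linear_combination (9 * M ^ 2 : ℂ) * hω1
    exact_mod_cast this
  obtain ⟨hL, m, hm⟩ := unique_rep n p hp hprime.out (2 * (3 * e - 1) - 3 * M) M
    (by rw [← hprodZ]; ring) (by omega)
  refine ⟨?_, ?_⟩
  · -- parity argument
    have hd := jac_dup hF χ
    have hS : ∃ s ∈ Algebra.adjoin ℤ {ω}, ∑ w, (eta (ZMod p) w + 1) * χ (1 - w) = 1 + 2 * s := by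
      have hw : ∀ w : ZMod p, ∃ s ∈ Algebra.adjoin ℤ {ω},
          (eta (ZMod p) w + 1) * χ (1 - w) = (if w = 0 then 1 else 0) + 2 * s := by
        intro w
        have hmem := MulChar.apply_mem_algebraAdjoin_of_pow_eq_one h3 hω (1 - w)
        by_cases h0 : w = 0
        · exact ⟨0, Subalgebra.zero_mem _, by simp [h0, MulChar.map_zero]⟩
        · rcases quadraticChar_dichotomy h0 with h1 | h1
          · exact ⟨_, hmem, by rw [eta_apply, h1, if_neg h0]; push_cast; ring⟩
          · exact ⟨0, Subalgebra.zero_mem _, by rw [eta_apply, h1]; simp [h0]⟩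
      choose s hs hs2 using hw
      refine ⟨∑ w, s w, Subalgebra.sum_mem _ fun w _ => hs w, ?_⟩
      rw [Finset.sum_congr rfl fun w _ => hs2 w, Finset.sum_add_distrib, Finset.mul_sum]
      simp
    obtain ⟨s, hs, hs2⟩ := hS
    rw [hs2] at hd
    have hmem4 := MulChar.apply_mem_algebraAdjoin_of_pow_eq_one h3 hω (4 : ZMod p)
    have h20 : (2 : ZMod p) ≠ 0 := two_ne hF
    obtain ⟨k, hk, hk2⟩ := MulChar.exists_apply_eq_pow h3 hω h20
    have h4 : χ 4 = χ 2 ^ 2 := by rw [← map_pow]; norm_num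
    obtain ⟨s1, s2, rfl⟩ := mem_adjoin_omega hω1 hs
    have hω3 : ω ^ 3 = 1 := hω.pow_eq_one
    rw [h4, hk2, hJ1] at hd
    obtain ⟨q, hq⟩ : ∃ q, e = 2 * q := ⟨e / 2, by omega⟩
    rw [hm, hq] at hd
    push_cast at hd
    interval_cases k
    · rw [hk2]; simp
    · exfalso
      -- ω ^ 2 * (6 q - 1 + 12 m ω) = 1 + 2 s1 + 2 s2 ω
      have hd' : (((-6 * q + 1 + 12 * m - 1 - 2 * s1 : ℤ) : ℂ)) +
          ((-6 * q + 1 - 2 * s2 : ℤ) : ℂ) * ω = 0 := by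
        push_cast
        linear_combination hd - 12 * m * hω3 - (6 * q - 1) * hω1
      have := (omega_indep hω1 hd').2
      omega
    · exfalso
      have hd' : (((-12 * m - 1 - 2 * s1 : ℤ) : ℂ)) +
          ((6 * q - 1 - 12 * m - 2 * s2 : ℤ) : ℂ) * ω = 0 := by
        push_cast
        linear_combination hd - ((6 * q - 1) * ω + 12 * m * ω ^ 2) * hω3 - 12 * m * hω1
      have := (omega_indep hω1 hd').2
      omega
  · rw [hJ1, hJ2]
    have : ((2 * (3 * e - 1) - 3 * M : ℤ) : ℂ) = ((-2 : ℤ) : ℂ) := by rw [hL]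
    push_cast at this ⊢
    linear_combination this

lemma card_diff {G : Type*} [AddCommGroup G] [DecidableEq G] [Fintype G] (A B : Finset G) (d : G) :
    (((A ×ˢ B).filter (fun q => q.1 - q.2 = d)).card : ℂ) =
      ∑ x : G, (if x ∈ A then (1 : ℂ) else 0) * (if x - d ∈ B then 1 else 0) := by
  have h : ((A ×ˢ B).filter (fun q => q.1 - q.2 = d)).card =
      (univ.filter (fun x => x ∈ A ∧ x - d ∈ B)).card := by
    refine Finset.card_bij' (fun q _ => q.1) (fun x _ => (x, x - d)) ?_ ?_ ?_ ?_
    · rintro ⟨x, y⟩ h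
      simp only [mem_filter, mem_product] at h
      obtain ⟨⟨hx, hy⟩, rfl⟩ := h
      simp [hx, hy]
    · intro x h
      simpa using h
    · rintro ⟨x, y⟩ h
      simp only [mem_filter, mem_product] at h
      obtain ⟨⟨hx, hy⟩, rfl⟩ := h
      simp
    · intro x h
      rfl
  rw [h, Finset.card_filter]
  push_cast
  refine Finset.sum_congr rfl fun x _ => ?_
  by_cases h1 : x ∈ A <;> by_cases h2 : x - d ∈ B <;> simp [h1, h2]

/-- the cyclotomic class -/
def cyc {p : ℕ} (n : ℕ) (α : (ZMod p)ˣ) (i : ℕ) : Finset (ZMod p) :=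
  (Finset.range (18 * n ^ 2)).image (fun t => ((α : ZMod p)) ^ (i + 6 * t))

lemma pow_mem_cyc {n p : ℕ} {α : (ZMod p)ˣ} (hn : 0 < n) (ho : orderOf α = 108 * n ^ 2)
    {i : ℕ} (hi : i < 6) (k : ℕ) : ((α : ZMod p)) ^ k ∈ cyc n α i ↔ k % 6 = i := by
  have hN : 0 < n ^ 2 := by positivity
  unfold cyc
  generalize n ^ 2 = N at *
  have hiff : ∀ a b : ℕ, (α : ZMod p) ^ a = (α : ZMod p) ^ b ↔ a ≡ b [MOD 108 * N] := by
    intro a b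
    rw [← ho, ← pow_eq_pow_iff_modEq, ← Units.val_pow_eq_pow_val, ← Units.val_pow_eq_pow_val,
      Units.val_inj]
  simp only [mem_image, mem_range, hiff]
  constructor
  · rintro ⟨t, _, ht⟩
    have h6 : i + 6 * t ≡ k [MOD 6] := ht.of_dvd ⟨18 * N, by ring⟩
    unfold Nat.ModEq at h6
    omega
  · intro h
    have h1 : k % (108 * N) % 6 = k % 6 := Nat.mod_mod_of_dvd _ ⟨18 * N, by ring⟩
    have h2 : k % (108 * N) < 108 * N := Nat.mod_lt _ (by omega)
    refine ⟨k % (108 * N) / 6, by omega, ?_⟩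
    have h3 : i + 6 * (k % (108 * N) / 6) = k % (108 * N) := by omega
    rw [h3]
    exact Nat.mod_modEq _ _

lemma card_cyc {n p : ℕ} {α : (ZMod p)ˣ} (ho : orderOf α = 108 * n ^ 2)
    (i : ℕ) : (cyc n α i).card = 18 * n ^ 2 := by
  rw [cyc, Finset.card_image_of_injOn, card_range]
  intro a ha b hb hab
  simp only [coe_range, Set.mem_Iio] at ha hb
  have h : i + 6 * a ≡ i + 6 * b [MOD 108 * n ^ 2] := by
    rw [← ho, ← pow_eq_pow_iff_modEq, ← Units.val_inj]
    simpa using hab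
  have h1 : 6 * a ≡ 6 * b [MOD 108 * n ^ 2] := Nat.ModEq.add_left_cancel' i h
  have h2 := Nat.ModEq.eq_of_lt_of_lt h1 (by omega) (by omega)
  omega

lemma indicators {n p : ℕ} [Fact p.Prime] {α : (ZMod p)ˣ} (hn : 0 < n)
    (ho : orderOf α = 108 * n ^ 2) (hα : ∀ x : (ZMod p)ˣ, x ∈ Subgroup.zpowers α)
    (hF : ringChar (ZMod p) ≠ 2)
    (χ : MulChar (ZMod p) ℂ) (hχ : χ ≠ 1) (h3 : χ ^ 3 = 1) (x : ZMod p) :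
    6 * (if x ∈ cyc n α 0 then (1 : ℂ) else 0) =
      ((1 : MulChar (ZMod p) ℂ) x + χ x + χ⁻¹ x) +
      (eta (ZMod p) x + (eta (ZMod p) * χ) x + (eta (ZMod p) * χ⁻¹) x) ∧
    6 * (if x ∈ cyc n α 3 then (1 : ℂ) else 0) =
      ((1 : MulChar (ZMod p) ℂ) x + χ x + χ⁻¹ x) -
      (eta (ZMod p) x + (eta (ZMod p) * χ) x + (eta (ZMod p) * χ⁻¹) x) := by
  by_cases hx : x = 0
  · have : ∀ i, (0 : ZMod p) ∉ cyc n α i := by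
      intro i h
      simp only [cyc, mem_image] at h
      obtain ⟨t, _, ht⟩ := h
      exact (pow_ne_zero _ α.ne_zero) ht
    subst hx
    simp [this, MulChar.map_zero]
  obtain ⟨u, rfl⟩ : ∃ u : (ZMod p)ˣ, (u : ZMod p) = x := ⟨Units.mk0 x hx, rfl⟩
  obtain ⟨k, hk⟩ := (mem_powers_iff_mem_zpowers).mpr (hα u)
  simp only at hk
  have hu : (u : ZMod p) = (α : ZMod p) ^ k := by rw [← hk]; simp
  have hw3 : χ α ^ 3 = 1 := by
    rw [← MulChar.pow_apply_coe, h3, MulChar.one_apply_coe]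
  have hw1 : χ α ≠ 1 := by
    intro h
    apply hχ
    rw [MulChar.eq_iff hα, h, MulChar.one_apply_coe]
  have hw : χ α ^ 2 + χ α + 1 = 0 := by
    apply mul_left_cancel₀ (sub_ne_zero.mpr hw1)
    linear_combination hw3
  have he : eta (ZMod p) α = -1 := by
    rcases quadraticChar_dichotomy (F := ZMod p) α.ne_zero with h | h
    · exfalso
      apply eta_ne_one hF
      rw [MulChar.eq_iff hα, eta_apply, h, MulChar.one_apply_coe]; simp
    · rw [eta_apply, h]; simp
  have hinv : χ⁻¹ = χ ^ 2 := by
    rw [inv_eq_iff_mul_eq_one, ← pow_succ', h3]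
  rw [hinv, MulChar.mul_apply, MulChar.mul_apply, MulChar.pow_apply_coe, MulChar.one_apply_coe,
    hu, map_pow, map_pow, he]
  simp only [pow_mem_cyc hn ho (show 0 < 6 by norm_num), pow_mem_cyc hn ho (show 3 < 6 by norm_num)]
  generalize χ α = w at *
  have hk6 : k = 6 * (k / 6) + k % 6 := (Nat.div_add_mod k 6).symm
  have hwk : w ^ k = w ^ (k % 6) := by
    conv_lhs => rw [hk6, pow_add, pow_mul, show w ^ 6 = (w ^ 3) ^ 2 by ring, hw3]
    simp
  have hek : (-1 : ℂ) ^ k = (-1) ^ (k % 6) := by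
    conv_lhs => rw [hk6, pow_add, pow_mul]
    norm_num
  rw [hwk, hek]
  have hlt : k % 6 < 6 := Nat.mod_lt _ (by norm_num)
  generalize k % 6 = r at *
  have e4 : w ^ 4 = w := by linear_combination w * hw3
  have e5 : w ^ 5 = w ^ 2 := by linear_combination w ^ 2 * hw3
  clear hwk hek hk6 hk hu
  refine ⟨?_, ?_⟩ <;> interval_cases r <;> norm_num <;> grind

lemma main_count {n p : ℕ} (hp : p = 108 * n ^ 2 + 1) [hprime : Fact p.Prime] {α : (ZMod p)ˣ}
    (hn : 0 < n)
    (ho : orderOf α = 108 * n ^ 2) (hα : ∀ x : (ZMod p)ˣ, x ∈ Subgroup.zpowers α)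
    (hF : ringChar (ZMod p) ≠ 2)
    (χ : MulChar (ZMod p) ℂ) (hχ : χ ≠ 1) (h3 : χ ^ 3 = 1) (d : ZMod p) (hd : d ≠ 0) :
    outerCount ![cyc n α 0, cyc n α 3] d = 6 * n ^ 2 := by
  obtain ⟨hc2, hJ⟩ := J_facts n p hp hF χ hχ h3
  set η := eta (ZMod p) with hη
  have hη1 : η ≠ 1 := eta_ne_one hF
  have hηη : η * η = 1 := eta_mul_self
  have hηi : η⁻¹ = η := eta_inv
  have hinv : χ⁻¹ = χ * χ := by
    rw [inv_eq_iff_mul_eq_one, ← h3, pow_succ, pow_two, mul_assoc]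
  have hinv1 : χ⁻¹ ≠ 1 := by simpa using hχ
  have hm1 : χ (-1) = 1 := MulChar.val_neg_one_eq_one_of_odd_order (n := 3) (by decide) h3
  have hm2 : χ⁻¹ (-1) = 1 := by rw [hinv, MulChar.mul_apply, hm1]; simp
  have hm0 : (1 : MulChar (ZMod p) ℂ) (-1) = 1 := MulChar.one_apply (by simp)
  have hm : η (-1) = 1 := by
    rw [hη, eta_apply, quadraticChar_neg_one hF, ZMod.card, ZMod.χ₄_nat_one_mod_four (by omega)]
    simp
  have hm3 : (η * χ) (-1) = 1 := by rw [MulChar.mul_apply, hm, hm1]; simp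
  have hm4 : (η * χ⁻¹) (-1) = 1 := by rw [MulChar.mul_apply, hm, hm2]; simp
  have h20 : (2 : ZMod p) ≠ 0 := two_ne hF
  have h4 : (4 : ZMod p) = 2 ^ 2 := by norm_num
  have hχ4 : χ 4 = 1 := by rw [h4, map_pow, hc2]; simp
  have hχi4 : χ⁻¹ 4 = 1 := by rw [hinv, MulChar.mul_apply, hχ4]; simp
  have hη4 : η 4 = 1 := by rw [h4, hη, eta_sq h20]
  -- `η χ` and `η χ⁻¹` are nontrivial
  have hne : ∀ ψ : MulChar (ZMod p) ℂ, ψ ^ 3 = 1 → η * ψ ≠ 1 := by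
    intro ψ hψ h
    apply hη1
    calc η = (η * ψ) ^ 3 * (ψ ^ 3)⁻¹ * (η * η)⁻¹ := by
          rw [mul_pow]; 
          calc η = η ^ 3 * (η * η)⁻¹ := by group
            _ = _ := by rw [hψ]; simp
      _ = 1 := by rw [h, hψ, hηη]; simp
  have hi3 : χ⁻¹ ^ 3 = 1 := by rw [inv_pow, h3, inv_one]
  have n1 := hne χ h3
  have n2 := hne χ⁻¹ hi3
  -- Jacobi sums
  set J := jacobiSum χ χ with hJdef
  set J' := jacobiSum χ⁻¹ χ⁻¹ with hJdef'
  have j1 : jacobiSum η χ = J := (jac_dup' hF hχ hχ4).symm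
  have j2 : jacobiSum η χ⁻¹ = J' := (jac_dup' hF hinv1 hχi4).symm
  have j3 : jacobiSum η (η * χ) = J' := by rw [hη, jac_eta_mul hm, ← hη, j2]
  have j4 : jacobiSum η (η * χ⁻¹) = J := by rw [hη, jac_eta_mul hm, ← hη, inv_inv, j1]
  have j5 : jacobiSum (η * χ) (η * χ) = J' := by
    rw [jac_dup' hF n1 (by rw [MulChar.mul_apply, hη4, hχ4, one_mul]), ← hη, j3]
  have j6 : jacobiSum (η * χ⁻¹) (η * χ⁻¹) = J := by
    rw [jac_dup' hF n2 (by rw [MulChar.mul_apply, hη4, hχi4, one_mul]), ← hη, j4]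
  have j7 : jacobiSum (η * χ) (η * χ⁻¹) = -1 := by
    have := jacobiSum_nontrivial_inv n1
    rwa [mul_inv, hηi, hm3] at this
  have j8 : jacobiSum η η = -1 := by
    have := jacobiSum_nontrivial_inv hη1
    rwa [hηi, hm] at this
  have j9 : jacobiSum χ χ⁻¹ = -1 := by rw [jacobiSum_nontrivial_inv hχ, hm1]
  have j10 : jacobiSum 1 χ = -1 := jacobiSum_one_nontrivial hχ
  have j11 : jacobiSum 1 χ⁻¹ = -1 := jacobiSum_one_nontrivial hinv1
  have j12 : jacobiSum (1 : MulChar (ZMod p) ℂ) 1 = p - 2 := by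
    rw [jacobiSum_one_one, ZMod.card]
  have k1 : jacobiSum χ 1 = -1 := by rw [jacobiSum_comm, j10]
  have k2 : jacobiSum χ⁻¹ 1 = -1 := by rw [jacobiSum_comm, j11]
  have k3 : jacobiSum χ⁻¹ χ = -1 := by rw [jacobiSum_comm, j9]
  have k4 : jacobiSum (η * χ) η = J' := by rw [jacobiSum_comm, j3]
  have k5 : jacobiSum (η * χ⁻¹) η = J := by rw [jacobiSum_comm, j4]
  have k6 : jacobiSum (η * χ⁻¹) (η * χ) = -1 := by rw [jacobiSum_comm, j7]
  -- values at `d`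
  have hdu : IsUnit d := hd.isUnit
  have d1 : (1 : MulChar (ZMod p) ℂ) d = 1 := MulChar.one_apply hdu
  have d2 : η d * η d = 1 := by rw [← MulChar.mul_apply, hηη, d1]
  have d3 : χ⁻¹ d = χ d * χ d := by rw [hinv, MulChar.mul_apply]
  have d4 : χ d * χ d * χ d = 1 := by
    rw [← MulChar.mul_apply, ← MulChar.mul_apply, ← hinv, MulChar.inv_mul, d1]
  have hsum : (36 : ℂ) * (outerCount ![cyc n α 0, cyc n α 3] d : ℂ) = 2 * (p - 1) := by
    have ho2 : (outerCount ![cyc n α 0, cyc n α 3] d : ℂ) =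
        ∑ x : ZMod p, ((if x ∈ cyc n α 0 then (1 : ℂ) else 0) *
          (if x - d ∈ cyc n α 3 then 1 else 0) + (if x ∈ cyc n α 3 then (1 : ℂ) else 0) *
          (if x - d ∈ cyc n α 0 then 1 else 0)) := by
      rw [Finset.sum_add_distrib, ← card_diff, ← card_diff]
      simp [outerCount, Fin.sum_univ_two]
    have ho3 : (36 : ℂ) * (outerCount ![cyc n α 0, cyc n α 3] d : ℂ) =
        2 * ∑ x : ZMod p, (((1 : MulChar (ZMod p) ℂ) x + χ x + χ⁻¹ x) *
          ((1 : MulChar (ZMod p) ℂ) (x - d) + χ (x - d) + χ⁻¹ (x - d)) -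
          (η x + (η * χ) x + (η * χ⁻¹) x) *
          (η (x - d) + (η * χ) (x - d) + (η * χ⁻¹) (x - d))) := by
      rw [ho2, Finset.mul_sum, Finset.mul_sum]
      refine Finset.sum_congr rfl fun x _ => ?_
      obtain ⟨a1, a2⟩ := indicators hn ho hα hF χ hχ h3 x
      obtain ⟨b1, b2⟩ := indicators hn ho hα hF χ hχ h3 (x - d)
      rw [← hη] at a1 a2 b1 b2
      generalize (if x ∈ cyc n α 0 then (1 : ℂ) else 0) = A0 at *
      generalize (if x ∈ cyc n α 3 then (1 : ℂ) else 0) = A3 at *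
      generalize (if x - d ∈ cyc n α 0 then (1 : ℂ) else 0) = B0 at *
      generalize (if x - d ∈ cyc n α 3 then (1 : ℂ) else 0) = B3 at *
      have : (36 : ℂ) * (A0 * B3 + A3 * B0) = (6 * A0) * (6 * B3) + (6 * A3) * (6 * B0) := by ring
      rw [this, a1, a2, b1, b2]
      ring
    rw [ho3]
    congr 1
    simp only [mul_add, add_mul, Finset.sum_add_distrib, Finset.sum_sub_distrib]
    rw [shift_sum 1 1 hm0 hd, shift_sum 1 χ hm1 hd, shift_sum 1 χ⁻¹ hm2 hd,
      shift_sum χ 1 hm0 hd, shift_sum χ χ hm1 hd, shift_sum χ χ⁻¹ hm2 hd,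
      shift_sum χ⁻¹ 1 hm0 hd, shift_sum χ⁻¹ χ hm1 hd, shift_sum χ⁻¹ χ⁻¹ hm2 hd,
      shift_sum η η hm hd, shift_sum η (η * χ) hm3 hd, shift_sum η (η * χ⁻¹) hm4 hd,
      shift_sum (η * χ) η hm hd, shift_sum (η * χ) (η * χ) hm3 hd,
      shift_sum (η * χ) (η * χ⁻¹) hm4 hd,
      shift_sum (η * χ⁻¹) η hm hd, shift_sum (η * χ⁻¹) (η * χ) hm3 hd,
      shift_sum (η * χ⁻¹) (η * χ⁻¹) hm4 hd,
      j3, j4, j5, j6, j7, j8, j9, j10, j11, j12, k1, k2, k3, k4, k5, k6, ← hJdef, ← hJdef']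
    simp only [MulChar.mul_apply, d1, d3]
    generalize χ d = c at *
    generalize η d = e at *
    clear_value J J'
    have hJ' : J' = -2 - J := by linear_combination hJ
    subst hJ'
    grind
  have hpc : (p : ℂ) = 108 * n ^ 2 + 1 := by rw [hp]; push_cast; ring
  have : (outerCount ![cyc n α 0, cyc n α 3] d : ℂ) = ((6 * n ^ 2 : ℕ) : ℂ) := by
    push_cast
    linear_combination (1 / 36) * hsum + (1 / 18) * hpc
  exact_mod_cast this

end DSSaux

theorem stmt_11 (n p : ℕ) (hp : p = 108 * n ^ 2 + 1) (hprime : p.Prime) (hodd : Odd p)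
    (α : (ZMod p)ˣ) (hα : ∀ x : (ZMod p)ˣ, x ∈ Subgroup.zpowers α) :
    -- the 6th-power cyclotomic classes C_i^6 = {α^(i+6t) : 0 ≤ t < 18n²}
    let C : ℕ → Finset (ZMod p) := fun i =>
      (Finset.range (18 * n ^ 2)).image (fun t => ((α : ZMod p)) ^ (i + 6 * t))
    -- 2 is a cubic residue modulo p, and
    -- {C_0^6, C_3^6} is a perfect regular DSS(108n²+1, 18n², 2, 6n²)
    (∃ y : ZMod p, y ^ 3 = 2) ∧
    (C 0).card = 18 * n ^ 2 ∧ (C 3).card = 18 * n ^ 2 ∧ Disjoint (C 0) (C 3) ∧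
    (∀ d : ZMod p, d ≠ 0 → outerCount ![C 0, C 3] d = 6 * n ^ 2) := by
  intro C
  have : Fact p.Prime := ⟨hprime⟩
  have hC : C = DSSaux.cyc n α := rfl
  rw [hC]
  clear_value C
  have hn : 0 < n := by
    rcases Nat.eq_zero_or_pos n with h | h
    · subst h; rw [hp] at hprime; exact absurd hprime (by norm_num)
    · exact h
  have ho : orderOf α = 108 * n ^ 2 := by
    rw [orderOf_eq_card_of_forall_mem_zpowers hα, Nat.card_eq_fintype_card, ZMod.card_units, hp,
      Nat.add_sub_cancel]
  have hF : ringChar (ZMod p) ≠ 2 := by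
    rw [ZMod.ringChar_zmod_n]
    rintro rfl
    exact absurd hodd (by decide)
  obtain ⟨ω, hω, hω1, _⟩ := DSSaux.exists_omega
  obtain ⟨χ, hχ⟩ := MulChar.exists_mulChar_orderOf (ZMod p) (n := 3)
    (by rw [ZMod.card, hp]; exact ⟨36 * n ^ 2, by rw [Nat.add_sub_cancel]; ring⟩) hω
  have h3 : χ ^ 3 = 1 := by rw [← hχ]; exact pow_orderOf_eq_one χ
  have hχ1 : χ ≠ 1 := by
    rintro rfl
    simp at hχ
  refine ⟨?_, DSSaux.card_cyc ho 0, DSSaux.card_cyc ho 3, ?_, fun d hd =>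
    DSSaux.main_count hp hn ho hα hF χ hχ1 h3 d hd⟩
  · obtain ⟨hc2, _⟩ := DSSaux.J_facts n p hp hF χ hχ1 h3
    have h20 : (2 : ZMod p) ≠ 0 := DSSaux.two_ne hF
    obtain ⟨k, hk⟩ := (mem_powers_iff_mem_zpowers).mpr (hα (Units.mk0 2 h20))
    simp only at hk
    have hk2 : (α : ZMod p) ^ k = 2 := by
      rw [← Units.val_pow_eq_pow_val, hk]; rfl
    have hw3 : χ α ^ 3 = 1 := by
      rw [← MulChar.pow_apply_coe, h3, MulChar.one_apply_coe]
    have hw1 : χ α ≠ 1 := by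
      intro h
      apply hχ1
      rw [MulChar.eq_iff hα, h, MulChar.one_apply_coe]
    have hord : orderOf (χ α) = 3 := orderOf_eq_prime hw3 hw1
    rw [← hk2, map_pow] at hc2
    obtain ⟨m, rfl⟩ : 3 ∣ k := hord ▸ orderOf_dvd_of_pow_eq_one hc2
    exact ⟨(α : ZMod p) ^ m, by rw [← hk2, ← pow_mul, mul_comm]⟩
  · rw [Finset.disjoint_left]
    intro x hx hx3
    obtain ⟨t, _, rfl⟩ := Finset.mem_image.mp hx
    rw [DSSaux.pow_mem_cyc hn ho (by norm_num)] at hx3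
    omega
end
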